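/- For 1 ≤ p ≤ n and m ≥ 0 let e_m^{(p)} ∈ R be the coefficients defined by det(1 + tA^{(p)}) = ∑_m e_m^{(p)}·t^m, where A^{(p)} is the top-left p×p submatrix of A (so e_0^{(p)} = 1 and e_m^{(p)} = 0 for m > p); also set e_m^{(0)} = δ_{m,0}. Then for all n ≥ 1 and 1 ≤ m ≤ n: e_m^{(n)} = e_m^{(n−1)} + ∑_{k=0}^{m−1} (−1)^k·e_{m−1−k}^{(n−1−k)}·a_{n,n−k}. -/

import Mathlib

/-!
Expand the column-determinant along its last column. Multiplying on the left by the transposition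
`(p, last)` parametrises the permutations sending the last column to row `p`, so the corresponding
minor is that of the matrix whose row `p` has been overwritten by the last row; this involves no
reordering of factors and is valid over any ring (`cdet_succ`).

For a Hessenberg matrix `M` with superdiagonal `s`, only two entries of the last column survive,
and the overwritten matrix is again Hessenberg, of size one less, with the same superdiagonal and
the same leading minors as `M`. Induction on the size gives (`cdet_hessenberg`)
`det M^{(n+1)} = ∑_k (-1)^k det M^{(n-k)} · M_{n+1,n+1-k} · s^k`.
The recurrence is the coefficient of `X^m` in this identity for `M = 1 + XA`, `s = X`.
-/

/-- The (column-)determinant of the `p × p` matrix with entries `a i j` (`1`-based indices). -/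
noncomputable def cdet {R : Type*} [Ring R] (p : ℕ) (a : ℕ → ℕ → R) : R :=
  ∑ σ : Equiv.Perm (Fin p),
    (Equiv.Perm.sign σ : ℤ) • ((List.finRange p).map (fun t => a ((σ t : ℕ) + 1) ((t : ℕ) + 1))).prod

/-- `e_m^{(p)}`: the coefficient of `t^m` in `det(1 + tA^{(p)})`, where `A^{(p)}` is the
top-left `p × p` submatrix of `A`, the determinant computed in `R[t]`.
(In particular `e_0^{(0)} = 1` and `e_m^{(0)} = 0` for `m ≥ 1`.) -/
noncomputable def eCoeff {R : Type*} [Ring R] (a : ℕ → ℕ → R) (p m : ℕ) : R :=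
  Polynomial.coeff
    (cdet p (fun i j => (if i = j then 1 else 0) + Polynomial.X * Polynomial.C (a i j))) m

/-- Over any ring, the column-determinant of size `n + 1` expands along its last column; the minors
are written with row `p + 1` overwritten by row `n + 1`, which makes all the off-corner signs `-1`. -/
theorem cdet_succ {R : Type*} [Ring R] (n : ℕ) (M : ℕ → ℕ → R) :
    cdet (n + 1) M = cdet n M * M (n + 1) (n + 1) -
      ∑ p : Fin n, cdet n (fun i j => if i = (p : ℕ) + 1 then M (n + 1) j else M i j) *
        M ((p : ℕ) + 1) (n + 1) := by
  let e : Equiv.Perm (Fin (n + 1)) ≃ Option (Fin n) × Equiv.Perm (Fin n) :=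
    (finSuccEquivLast.permCongr).trans Equiv.Perm.decomposeOption
  have he_castSucc (o : Option (Fin n)) (τ : Equiv.Perm (Fin n)) (t : Fin n) :
      e.symm (o, τ) t.castSucc =
        finSuccEquivLast.symm (Equiv.swap none o (some (τ t))) := by
    simp [e, Equiv.permCongr_symm, Equiv.permCongr_apply]
  have he_last (o : Option (Fin n)) (τ : Equiv.Perm (Fin n)) :
      e.symm (o, τ) (Fin.last n) = finSuccEquivLast.symm o := by
    simp [e, Equiv.permCongr_symm, Equiv.permCongr_apply]
  have he_sign (o : Option (Fin n)) (τ : Equiv.Perm (Fin n)) :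
      Equiv.Perm.sign (e.symm (o, τ)) =
        Equiv.Perm.sign (Equiv.swap none o) * Equiv.Perm.sign τ := by
    simp [e, Equiv.permCongr_symm]
  unfold cdet
  rw [← e.symm.sum_comp, Fintype.sum_prod_type, Fintype.sum_option, sub_eq_add_neg,
    ← Finset.sum_neg_distrib, Finset.sum_mul]
  simp_rw [Finset.sum_mul, ← Finset.sum_neg_distrib, List.finRange_succ_last, List.map_append,
    List.map_map, List.prod_append, Function.comp_def, he_castSucc, he_sign, List.map_singleton,
    List.prod_singleton, he_last]
  congr 1
  · simp [mul_assoc]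
  · refine Finset.sum_congr rfl fun p _ => Finset.sum_congr rfl fun τ _ => ?_
    have h (t : Fin n) : M ((finSuccEquivLast.symm
          (Equiv.swap none (some p) (some (τ t))) : ℕ) + 1) ((t : ℕ) + 1) =
        if (τ t : ℕ) + 1 = (p : ℕ) + 1 then M (n + 1) ((t : ℕ) + 1)
        else M ((τ t : ℕ) + 1) ((t : ℕ) + 1) := by
      by_cases hp : τ t = p
      · simp [hp]
      · rw [Equiv.swap_apply_of_ne_of_ne (by simp) (by simpa using hp)]
        simp [hp, Fin.val_inj]
    simp [h, mul_assoc]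

theorem cdet_congr {R : Type*} [Ring R] (p : ℕ) (M N : ℕ → ℕ → R)
    (h : ∀ i j, 1 ≤ i → i ≤ p → M i j = N i j) : cdet p M = cdet p N := by
  unfold cdet
  refine Finset.sum_congr rfl fun σ _ => ?_
  congr 3
  funext t
  exact h _ _ (by omega) (by omega)

/-- Expansion of a Hessenberg column-determinant along its last row. -/
theorem cdet_hessenberg {R : Type*} [Ring R] (s : R) (n : ℕ) (M : ℕ → ℕ → R)
    (h0 : ∀ i j, 1 ≤ i → j ≤ n + 1 → i + 1 < j → M i j = 0)
    (hs : ∀ i, 1 ≤ i → i ≤ n → M i (i + 1) = s) :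
    cdet (n + 1) M = ∑ k ∈ Finset.range (n + 1),
      (-1) ^ k * (cdet (n - k) M * (M (n + 1) (n + 1 - k) * s ^ k)) := by
  induction n generalizing M with
  | zero => simp [cdet_succ]
  | succ n ih =>
    rw [cdet_succ, Finset.sum_range_succ', Fin.sum_univ_castSucc]
    have hz : ∀ p : Fin n, M ((p.castSucc : ℕ) + 1) (n + 1 + 1) = 0 := fun p =>
      h0 _ _ (by omega) le_rfl (by simp)
    simp only [hz, mul_zero, Finset.sum_const_zero, zero_add, Fin.val_last]
    rw [hs (n + 1) (by omega) le_rfl, ih fun i j => if i = n + 1 then M (n + 1 + 1) j else M i j]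
    · rw [sub_eq_add_neg, add_comm, Finset.sum_mul, ← Finset.sum_neg_distrib]
      congr 1
      · refine Finset.sum_congr rfl fun k hk => ?_
        rw [cdet_congr (n - k) _ M fun i j _ hi => if_neg (by omega), if_pos rfl,
          Nat.add_sub_add_right, Nat.add_sub_add_right (n + 1) 1 k]
        simp only [pow_succ, mul_assoc, neg_mul, mul_neg, one_mul]
      · simp
    · intro i j hi hj hij
      rw [if_neg (by omega)]
      exact h0 i j hi (by omega) hij
    · intro i hi hin
      rw [if_neg (by omega)]
      exact hs i hi (by omega)

/-- The recurrence for the coefficients of `det(1 + tA^{(p)})` for a Hessenberg matrix `A`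
with unit superdiagonal: for `n ≥ 1` and `1 ≤ m ≤ n`,
`e_m^{(n)} = e_m^{(n−1)} + ∑_{k=0}^{m−1} (−1)^k · e_{m−1−k}^{(n−1−k)} · a_{n,n−k}`. -/
theorem eCoeff_recurrence {R : Type*} [Ring R] (n : ℕ) (hn : 1 ≤ n)
    (a : ℕ → ℕ → R)
    (hHess : ∀ i j, 1 ≤ i → 1 ≤ j → i ≤ n → j ≤ n → i + 1 < j → a i j = 0)
    (hSuper : ∀ i, 1 ≤ i → i + 1 ≤ n → a i (i + 1) = 1)
    (m : ℕ) (hm1 : 1 ≤ m) (hmn : m ≤ n) :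
    eCoeff a n m =
      eCoeff a (n - 1) m +
        ∑ k ∈ Finset.range m,
          (-1 : R) ^ k * (eCoeff a (n - 1 - k) (m - 1 - k) * a n (n - k)) := by
  obtain ⟨n, rfl⟩ : ∃ N, n = N + 1 := ⟨n - 1, by omega⟩
  simp only [eCoeff, Nat.add_sub_cancel]
  set B : ℕ → ℕ → Polynomial R :=
    fun i j => (if i = j then 1 else 0) + Polynomial.X * Polynomial.C (a i j) with hB
  rw [cdet_hessenberg Polynomial.X n B]
  · have hterm : ∀ k ∈ Finset.range (n + 1),
        ((-1) ^ k * (cdet (n - k) B * (B (n + 1) (n + 1 - k) * Polynomial.X ^ k))).coeff m =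
        (if k = 0 then (cdet n B).coeff m else 0) +
        (if k < m then (-1) ^ k * ((cdet (n - k) B).coeff (m - 1 - k) * a (n + 1) (n + 1 - k))
          else 0) := by
      intro k hk
      rw [Finset.mem_range] at hk
      have h1 : B (n + 1) (n + 1 - k) * Polynomial.X ^ k =
          (if k = 0 then 1 else 0) +
            Polynomial.C (a (n + 1) (n + 1 - k)) * Polynomial.X ^ (k + 1) := by
        have hk0 : n + 1 = n + 1 - k ↔ k = 0 := by omega
        simp only [hB, hk0, add_mul, Polynomial.X_mul_C, mul_assoc, ← pow_succ']
        split_ifs with h <;> simp [h]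
      have h2 : ((-1) ^ k : Polynomial R) = Polynomial.C ((-1) ^ k) := by simp
      rw [h1, h2, Polynomial.coeff_C_mul, mul_add, Polynomial.coeff_add, ← mul_assoc,
        Polynomial.coeff_mul_X_pow', Polynomial.coeff_mul_C, mul_add]
      congr 1
      · split_ifs with h <;> simp [h]
      · rw [Nat.sub_sub, add_comm 1 k]
        split_ifs <;> first | rfl | omega | simp
    rw [Polynomial.finsetSum_coeff, Finset.sum_congr rfl hterm, Finset.sum_add_distrib]
    congr 1
    · simp
    · rw [← Finset.sum_filter]
      refine Finset.sum_congr ?_ fun _ _ => rfl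
      ext k
      simp only [Finset.mem_filter, Finset.mem_range]
      omega
  · intro i j hi hj hij
    simp [hB, hHess i j hi (by omega) (by omega) hj hij, show i ≠ j by omega]
  · intro i hi hin
    simp [hB, hSuper i hi (by omega)]
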